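/- For integers k ≥ 4, 4 ≤ t ≤ k+1, and n ≥ k+1, the following recurrence holds: f_k(k+1, t; P_n) < 2^{C(M, k−1)}, where M = f_{k−1}(k, t−1; P_{n−1}) and C(M, k−1) denotes the binomial coefficient M choose k−1. -/

import Mathlib

/-!
The proof is the Erdős–Rado stepping-up argument.  Write `m = k - 1` and let `M` be admissible for
the `m`-uniform problem.  Given a coloring of the `(m+1)`-subsets of `{1,...,N}`, where
`N = (∑ i < M, 2 ^ C(i, m)) + 1`, vertices are picked greedily: the smallest remaining candidate
becomes the next vertex, and the other candidates are thinned out, by the pigeonhole principle, so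
that the color of `e ∪ {z}` does not depend on the candidate `z`, for each `m`-set `e` of picked
vertices (`exists_endHomogeneous`).  This yields a set `P` of `M` vertices and a further vertex `w`
above `P`, such that the color of `e ∪ {z}`, for an `m`-set `e ⊆ P` and `z ∈ P ∪ {w}` above `e`,
depends only on `e`.  Color `e` by that color.  A blue tight path on `n` vertices in `P` becomes,
with `w` appended, a blue tight path on `n + 1` vertices.  An `(m+1)`-set `S ⊆ P` spanning `t` red
sets yields `t` red sets in `S ∪ {w}`, and since the first `m` vertices of `S` form a red set, `S`
itself is red too, and it consists of the `m + 1` smallest vertices of `S ∪ {w}`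
(`Admissible.step`).

The same step, started from the trivial `0`-uniform problem, shows that admissible `M` exist
(`exists_admissible`), so that the infima in the definition are attained.  It remains to compare
`(∑ i < M, 2 ^ C(i, m)) + 1 ≤ (M + 1) * 2 ^ C(M-1, m)` with `2 ^ C(M, m)`, which is easy because
`C(M, m) - C(M-1, m) = C(M-1, m-1) ≥ M - 1`.
-/

/-!
Colorings are maps from finite sets of naturals to `Bool`,
with `true` = red and `false` = blue.  All structures live inside
the vertex set `{1, ..., N}`, i.e. `Finset.Icc 1 N`.
-/

/-- A blue ordered copy of the `k`-uniform tight path on `n` vertices inside `{1,...,N}`: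
a strictly increasing sequence `x 0 < x 1 < ⋯ < x (n-1)` of elements of `{1,...,N}`
all of whose consecutive `k`-element windows are blue. -/
def HasBlueTightPath (k n N : ℕ) (χ : Finset ℕ → Bool) : Prop :=
  ∃ x : ℕ → ℕ, StrictMono x ∧ (∀ i < n, x i ∈ Finset.Icc 1 N) ∧
    ∀ j, j + k ≤ n → χ ((Finset.range k).image fun i => x (j + i)) = false

/-- A red copy of the complete `k`-uniform hypergraph on `s` vertices inside `{1,...,N}`:
a set of `s` vertices all of whose `k`-element subsets are red. -/
def HasRedClique (k s N : ℕ) (χ : Finset ℕ → Bool) : Prop :=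
  ∃ S : Finset ℕ, S ⊆ Finset.Icc 1 N ∧ S.card = s ∧
    ∀ e ⊆ S, e.card = k → χ e = true

/-- The Ramsey number `r_k(s, P_n)`. -/
noncomputable def cliquePathRamsey (k s n : ℕ) : ℕ :=
  sInf {N | ∀ χ : Finset ℕ → Bool, HasRedClique k s N χ ∨ HasBlueTightPath k n N χ}

/-- An ordered copy of the path power `P_m^ℓ` in color `c` inside `{1,...,N}`:
a strictly increasing sequence `x 0 < ⋯ < x (m-1)` in `{1,...,N}` with
`χ {x i, x j} = c` whenever `i < j < m` and `j - i ≤ ℓ`. -/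
def HasPowPath (ℓ m N : ℕ) (c : Bool) (χ : Finset ℕ → Bool) : Prop :=
  ∃ x : ℕ → ℕ, StrictMono x ∧ (∀ i < m, x i ∈ Finset.Icc 1 N) ∧
    ∀ i j, i < j → j < m → j - i ≤ ℓ → χ {x i, x j} = c

/-- The ordered Ramsey number `r(P_a^ℓ, P_b^ℓ)`. -/
noncomputable def powPathRamsey (ℓ a b : ℕ) : ℕ :=
  sInf {N | ∀ χ : Finset ℕ → Bool, HasPowPath ℓ a N true χ ∨ HasPowPath ℓ b N false χ}

/-- A set of `s` vertices inside `{1,...,N}` spanning at least `t` red `k`-element subsets. -/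
def HasRedSpread (k s t N : ℕ) (χ : Finset ℕ → Bool) : Prop :=
  ∃ S : Finset ℕ, S ⊆ Finset.Icc 1 N ∧ S.card = s ∧
    t ≤ ((Finset.powersetCard k S).filter fun e => χ e = true).card

/-- The Ramsey number `r_k(s, t; P_n)`. -/
noncomputable def spreadPathRamsey (k s t n : ℕ) : ℕ :=
  sInf {N | ∀ χ : Finset ℕ → Bool, HasRedSpread k s t N χ ∨ HasBlueTightPath k n N χ}

/-- A set `S` of `k+1` vertices inside `{1,...,N}` spanning at least `t` red `k`-element
subsets, one of which consists of the `k` smallest vertices of `S` (i.e. `S` minus its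
maximum element `v`). -/
def HasRedInitialSpread (k t N : ℕ) (χ : Finset ℕ → Bool) : Prop :=
  ∃ S : Finset ℕ, S ⊆ Finset.Icc 1 N ∧ S.card = k + 1 ∧
    (∃ v ∈ S, (∀ u ∈ S, u ≤ v) ∧ χ (S.erase v) = true) ∧
    t ≤ ((Finset.powersetCard k S).filter fun e => χ e = true).card

/-- The Ramsey number `f_k(k+1, t; P_n)`: the minimum `N` such that every coloring of the
`k`-sets of `{1,...,N}` has a blue tight path on `n` vertices or a set of `k+1` vertices
spanning at least `t` red `k`-sets, one of which consists of its `k` smallest vertices. -/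
noncomputable def initialSpreadPathRamsey (k t n : ℕ) : ℕ :=
  sInf {N | ∀ χ : Finset ℕ → Bool, HasRedInitialSpread k t N χ ∨ HasBlueTightPath k n N χ}

/-- A blue ordered copy of the `k`-uniform broom `B_{a,m}` inside `{1,...,N}`:
vertices `v 0 < ⋯ < v (a-1) < w 0 < ⋯ < w (m-1)`, every consecutive `k`-window of the
`v`'s is blue, and (provided `a ≥ k-1`) for each `j` the `k`-set consisting of the last
`k-1` of the `v`'s together with `w j` is blue. -/
def HasBlueBroom (k a m N : ℕ) (χ : Finset ℕ → Bool) : Prop :=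
  ∃ v w : ℕ → ℕ, StrictMono v ∧ StrictMono w ∧
    (∀ i < a, v i ∈ Finset.Icc 1 N) ∧ (∀ j < m, w j ∈ Finset.Icc 1 N) ∧
    (∀ i < a, ∀ j < m, v i < w j) ∧
    (∀ j, j + k ≤ a → χ ((Finset.range k).image fun i => v (j + i)) = false) ∧
    (k - 1 ≤ a → ∀ j < m,
      χ (insert (w j) ((Finset.range (k - 1)).image fun i => v (a - (k - 1) + i))) = false)

/-- The Ramsey number `r_3(4, 3; B_{a,m})` for the `3`-uniform broom. -/
noncomputable def spreadBroomRamsey3 (a m : ℕ) : ℕ :=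
  sInf {N | ∀ χ : Finset ℕ → Bool, HasRedSpread 3 4 3 N χ ∨ HasBlueBroom 3 a m N χ}

/-- The tower function: `twr 1 x = x` and `twr (i+1) x = 2 ^ twr i x`. -/
def twr (i x : ℕ) : ℕ := (fun y => 2 ^ y)^[i - 1] x

/-- The real tower function: `rtwr 1 x = x` and `rtwr (i+1) x = 2 ^ rtwr i x`. -/
noncomputable def rtwr (i : ℕ) (x : ℝ) : ℝ := (fun y => (2 : ℝ) ^ y)^[i - 1] x

/-- `N` forces a red initial spread or a blue tight path; the number
`initialSpreadPathRamsey k t n` is the least such `N`. -/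
def Admissible (k t n N : ℕ) : Prop :=
  ∀ χ : Finset ℕ → Bool, HasRedInitialSpread k t N χ ∨ HasBlueTightPath k n N χ

/-- For every `m`-set `e ⊆ P`, the color of `e ∪ {z}` is the same for all `z ∈ Q`
above `e`. -/
def EndHomogeneous (m : ℕ) (χ : Finset ℕ → Bool) (P Q : Finset ℕ) : Prop :=
  ∀ e ⊆ P, e.card = m → ∀ z ∈ Q, ∀ z' ∈ Q, (∀ i ∈ e, i < z) → (∀ i ∈ e, i < z') →
    χ (insert z e) = χ (insert z' e)

/-- Pigeonhole: the candidates `A` can be restricted, at the cost of a factor `2 ^ |F|`, so that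
the color of `e ∪ {x}` is independent of the candidate `x` for each `e ∈ F`. -/
lemma exists_uniform_subset (χ : Finset ℕ → Bool) (A : Finset ℕ) (F : Finset (Finset ℕ)) :
    ∃ B ⊆ A, A.card ≤ B.card * 2 ^ F.card ∧
      ∀ e ∈ F, ∀ x ∈ B, ∀ y ∈ B, χ (insert x e) = χ (insert y e) := by
  classical
  let g : ℕ → Finset (Finset ℕ) := fun x => F.filter fun e => χ (insert x e) = true
  obtain ⟨y, -, hy⟩ := Finset.exists_max_image F.powerset
    (fun y => (A.filter fun x => g x = y).card) ⟨∅, by simp⟩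
  refine ⟨A.filter fun x => g x = y, Finset.filter_subset _ _, ?_, ?_⟩
  · rw [← Finset.card_powerset]
    exact Finset.card_le_mul_card_image_of_maps_to
      (fun x _ => Finset.mem_powerset.2 (Finset.filter_subset _ _)) _ hy
  · intro e he x hx x' hx'
    have h : g x = g x' := (Finset.mem_filter.1 hx).2.trans (Finset.mem_filter.1 hx').2.symm
    have h2 : e ∈ g x ↔ e ∈ g x' := by rw [h]
    simp only [g, Finset.mem_filter, he, true_and] at h2
    exact Bool.eq_iff_iff.2 h2

/-- The greedy selection after `p` steps: `P` holds the picked vertices and `A` the remaining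
candidates. -/
lemma greedy (m M N : ℕ) (χ : Finset ℕ → Bool)
    (hN : (∑ i ∈ Finset.range M, 2 ^ Nat.choose i m) + 1 ≤ N) (p : ℕ) (hp : p ≤ M) :
    ∃ P A : Finset ℕ, P ⊆ Finset.Icc 1 N ∧ A ⊆ Finset.Icc 1 N ∧ P.card = p ∧
      (∀ x ∈ P, ∀ a ∈ A, x < a) ∧ EndHomogeneous m χ P (P ∪ A) ∧
      (∑ i ∈ Finset.Ico p M, 2 ^ Nat.choose i m) + 1 ≤ A.card * 2 ^ Nat.choose p m := by
  classical
  induction p with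
  | zero =>
    -- The thinning matters here only for `m = 0`, where `∅` is already an `m`-set.
    obtain ⟨B, hB, hc, hu⟩ :=
      exists_uniform_subset χ (Finset.Icc 1 N) (Finset.powersetCard m ∅)
    refine ⟨∅, B, by simp, hB, by simp, by simp, ?_, ?_⟩
    · intro e he hm z hz z' hz' _ _
      rw [Finset.empty_union] at hz hz'
      exact hu e (Finset.mem_powersetCard.2 ⟨he, hm⟩) z hz z' hz'
    · rw [← Finset.range_eq_Ico]
      rw [Finset.card_powersetCard, Nat.card_Icc, Finset.card_empty] at hc
      omega
  | succ p ih =>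
    obtain ⟨P, A, hPN, hAN, hP, hPA, hH, hc⟩ := ih (by omega)
    have hA : A.Nonempty := by
      rw [Finset.nonempty_iff_ne_empty]
      rintro rfl
      simp at hc
    set a := A.min' hA with ha
    have haA : a ∈ A := A.min'_mem hA
    have haP : a ∉ P := fun h => lt_irrefl a (hPA a h a haA)
    obtain ⟨B, hB, hBc, hu⟩ := exists_uniform_subset χ (A.erase a)
      (Finset.powersetCard m (insert a P) \ Finset.powersetCard m P)
    have hBA : B ⊆ A := hB.trans (Finset.erase_subset _ _)
    have haB : ∀ b ∈ B, a < b := by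
      intro b hb
      have h1 := Finset.mem_erase.1 (hB hb)
      exact lt_of_le_of_ne (A.min'_le b h1.2) (Ne.symm h1.1)
    have hcard : (insert a P).card = p + 1 := by rw [Finset.card_insert_of_notMem haP, hP]
    refine ⟨insert a P, B, Finset.insert_subset (hAN haA) hPN, hBA.trans hAN, hcard, ?_, ?_, ?_⟩
    · intro x hx b hb
      rcases Finset.mem_insert.1 hx with rfl | hx
      · exact haB b hb
      · exact hPA x hx b (hBA hb)
    · intro e he hm z hz z' hz' hez hez'
      by_cases hae : a ∈ e
      · have key : ∀ z ∈ insert a P ∪ B, a < z → z ∈ B := by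
          intro z hz haz
          rcases Finset.mem_union.1 hz with h | h
          · rcases Finset.mem_insert.1 h with rfl | h
            · exact absurd haz (lt_irrefl _)
            · exact absurd (hPA z h a haA) (not_lt.2 haz.le)
          · exact h
        refine hu e ?_ z (key z hz (hez a hae)) z' (key z' hz' (hez' a hae))
        rw [Finset.mem_sdiff, Finset.mem_powersetCard, Finset.mem_powersetCard]
        exact ⟨⟨he, hm⟩, fun h => haP (h.1 hae)⟩
      · have hsub : insert a P ∪ B ⊆ P ∪ A := by
          intro x hx
          rcases Finset.mem_union.1 hx with h | h
          · rcases Finset.mem_insert.1 h with rfl | h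
            · exact Finset.mem_union_right _ haA
            · exact Finset.mem_union_left _ h
          · exact Finset.mem_union_right _ (hBA h)
        exact hH e ((Finset.subset_insert_iff_of_notMem hae).1 he) hm z (hsub hz) z' (hsub hz')
          hez hez'
    · have hF : (Finset.powersetCard m (insert a P) \ Finset.powersetCard m P).card +
          Nat.choose p m = Nat.choose (p + 1) m := by
        have h := Finset.card_sdiff_add_card_eq_card
          (Finset.powersetCard_mono (n := m) (Finset.subset_insert a P))
        rwa [Finset.card_powersetCard, Finset.card_powersetCard, hcard, hP] at h
      rw [Finset.card_erase_of_mem haA] at hBc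
      rw [Finset.sum_eq_sum_Ico_succ_bot (by omega)] at hc
      rw [← hF, pow_add, ← mul_assoc]
      have h1 := Nat.mul_le_mul_right (2 ^ Nat.choose p m) hBc
      rw [Nat.sub_mul] at h1
      omega

lemma exists_endHomogeneous (m M N : ℕ) (χ : Finset ℕ → Bool)
    (hN : (∑ i ∈ Finset.range M, 2 ^ Nat.choose i m) + 1 ≤ N) :
    ∃ (P : Finset ℕ) (w : ℕ), P ⊆ Finset.Icc 1 N ∧ w ∈ Finset.Icc 1 N ∧ P.card = M ∧
      (∀ x ∈ P, x < w) ∧ EndHomogeneous m χ P (insert w P) := by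
  obtain ⟨P, A, hPN, hAN, hP, hPA, hH, hc⟩ := greedy m M N χ hN M le_rfl
  have hA : A.Nonempty := by
    rw [Finset.nonempty_iff_ne_empty]
    rintro rfl
    simp at hc
  obtain ⟨w, hw⟩ := hA
  refine ⟨P, w, hPN, hAN hw, hP, fun x hx => hPA x hx w hw, ?_⟩
  have hsub : insert w P ⊆ P ∪ A :=
    Finset.insert_subset (Finset.mem_union_right _ hw) Finset.subset_union_left
  exact fun e he hm z hz z' hz' => hH e he hm z (hsub hz) z' (hsub hz')

/-- Increasing enumeration of a finite set of positive integers, starting at index `1`. -/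
lemma exists_enum (P : Finset ℕ) :
    0 ∉ P → ∃ v : ℕ → ℕ, StrictMono v ∧ ∀ i ∈ Finset.Icc 1 P.card, v i ∈ P := by
  induction P using Finset.induction_on_max with
  | empty => exact fun _ => ⟨id, strictMono_id, by simp⟩
  | insert a s hs ih =>
    intro h0
    rw [Finset.mem_insert, not_or] at h0
    obtain ⟨v, hv, hvs⟩ := ih h0.2
    have has : a ∉ s := fun h => lt_irrefl a (hs a h)
    have hlt : 0 < s.card → v s.card < a := fun h =>
      hs _ (hvs _ (Finset.mem_Icc.2 ⟨h, le_rfl⟩))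
    -- If `s` is empty then `v 0` is unconstrained and must be replaced by `0`.
    refine ⟨fun i => if i = 0 then 0 else if i ≤ s.card then v i else a + (i - (s.card + 1)),
      ?_, ?_⟩
    · apply strictMono_nat_of_lt_succ
      intro i
      have h1 : v i < v (i + 1) := hv (Nat.lt_succ_self i)
      rcases Nat.lt_trichotomy i s.card with h | h | h
      · have : i + 1 ≤ s.card := h
        simp only [this, h.le, if_true, Nat.succ_ne_zero, if_false]
        split_ifs <;> omega
      · subst h
        simp
        split_ifs with h
        · omega
        · exact hlt (Finset.card_pos.2 (Finset.nonempty_iff_ne_empty.2 h))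
      · have h2 : ¬ i ≤ s.card := by omega
        have h3 : ¬ i + 1 ≤ s.card := by omega
        have h4 : i ≠ 0 := by omega
        simp only [h2, h3, h4, if_false, Nat.succ_ne_zero]
        omega
    · intro i hi
      rw [Finset.card_insert_of_notMem has, Finset.mem_Icc] at hi
      have h4 : i ≠ 0 := by omega
      simp only [h4, if_false]
      split_ifs with h
      · exact Finset.mem_insert_of_mem (hvs i (Finset.mem_Icc.2 ⟨hi.1, h⟩))
      · have : i = s.card + 1 := by omega
        simp [this]

/-- The stepping-up recurrence. -/
lemma Admissible.step {m t n M : ℕ} (hM : Admissible m t n M) :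
    Admissible (m + 1) (t + 1) (n + 1) ((∑ i ∈ Finset.range M, 2 ^ Nat.choose i m) + 1) := by
  classical
  intro χ
  obtain ⟨P, w, hPN, hwN, hP, hPw, hH⟩ := exists_endHomogeneous m M _ χ le_rfl
  generalize (∑ i ∈ Finset.range M, 2 ^ Nat.choose i m) + 1 = N at *
  obtain ⟨v, hv, hvP⟩ := exists_enum P fun h => by simpa using hPN h
  rw [hP] at hvP
  have hinj : Function.Injective v := hv.injective
  have hext : ∀ I ⊆ Finset.Icc 1 M, I.card = m → ∀ z ∈ insert w P, (∀ i ∈ I, v i < z) →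
      χ (insert z (I.image v)) = χ (insert w (I.image v)) := by
    intro I hI hIm z hz hIz
    have hIP : I.image v ⊆ P := by
      intro x hx
      obtain ⟨i, hi, rfl⟩ := Finset.mem_image.1 hx
      exact hvP i (hI hi)
    refine hH _ hIP (by rw [Finset.card_image_of_injective _ hinj, hIm]) z hz w
      (Finset.mem_insert_self _ _) ?_ (fun x hx => hPw x (hIP hx))
    simpa using hIz
  rcases hM fun I => χ (insert w (I.image v)) with h | h
  · left
    obtain ⟨S, hS, hSc, ⟨u, huS, humax, hured⟩, hred⟩ := h
    have hSP : S.image v ⊆ P := by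
      intro x hx
      obtain ⟨i, hi, rfl⟩ := Finset.mem_image.1 hx
      exact hvP i (hS hi)
    have hwS : w ∉ S.image v := fun h => lt_irrefl w (hPw w (hSP h))
    have hSred : χ (S.image v) = true := by
      have h1 := hext (S.erase u) ((Finset.erase_subset _ _).trans hS)
        (by rw [Finset.card_erase_of_mem huS, hSc]; rfl) (v u)
        (Finset.mem_insert_of_mem (hvP u (hS huS))) (by
          intro i hi
          have h2 := Finset.mem_erase.1 hi
          exact hv (lt_of_le_of_ne (humax i h2.2) h2.1))
      rw [← Finset.image_insert, Finset.insert_erase huS] at h1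
      rw [h1]
      exact hured
    have hScard : (S.image v).card = m + 1 := by
      rw [Finset.card_image_of_injective _ hinj, hSc]
    refine ⟨insert w (S.image v), Finset.insert_subset hwN (hSP.trans hPN), ?_, ?_, ?_⟩
    · rw [Finset.card_insert_of_notMem hwS, hScard]
    · refine ⟨w, Finset.mem_insert_self _ _, ?_, ?_⟩
      · intro x hx
        rcases Finset.mem_insert.1 hx with rfl | hx
        · exact le_rfl
        · exact (hPw x (hSP hx)).le
      · rw [Finset.erase_insert hwS]
        exact hSred
    · set R := (Finset.powersetCard m S).filter
        fun e => (fun I : Finset ℕ => χ (insert w (I.image v))) e = true with hR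
      have hwI : ∀ I ∈ R, w ∉ I.image v := fun I hI h =>
        hwS (Finset.image_subset_image
          (Finset.mem_powersetCard.1 (Finset.mem_filter.1 hI).1).1 h)
      have hRinj : Set.InjOn (fun I : Finset ℕ => insert w (I.image v)) R := by
        intro I hI J hJ hIJ
        have h1 := congrArg (fun X => Finset.erase X w) hIJ
        simp only [Finset.erase_insert (hwI I hI), Finset.erase_insert (hwI J hJ)] at h1
        exact Finset.image_injective hinj h1
      have hnew : S.image v ∉ R.image fun I : Finset ℕ => insert w (I.image v) := by
        intro h
        obtain ⟨I, -, hI⟩ := Finset.mem_image.1 h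
        exact hwS (hI ▸ Finset.mem_insert_self _ _)
      calc t + 1 ≤ R.card + 1 := Nat.succ_le_succ hred
        _ = (insert (S.image v) (R.image fun I : Finset ℕ => insert w (I.image v))).card := by
          rw [Finset.card_insert_of_notMem hnew, Finset.card_image_of_injOn hRinj]
        _ ≤ _ := Finset.card_le_card ?_
      intro e he
      rw [Finset.mem_filter, Finset.mem_powersetCard]
      rcases Finset.mem_insert.1 he with rfl | he
      · exact ⟨⟨Finset.subset_insert _ _, hScard⟩, hSred⟩
      · obtain ⟨I, hI, rfl⟩ := Finset.mem_image.1 he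
        have h1 := Finset.mem_filter.1 hI
        have h2 := Finset.mem_powersetCard.1 h1.1
        refine ⟨⟨Finset.insert_subset_insert _ (Finset.image_subset_image h2.1), ?_⟩, h1.2⟩
        rw [Finset.card_insert_of_notMem (hwI I hI), Finset.card_image_of_injective _ hinj, h2.2]
  · right
    obtain ⟨x, hx, hxM, hblue⟩ := h
    have hxw : ∀ i < n, v (x i) < w := fun i hi => hPw _ (hvP _ (hxM i hi))
    refine ⟨fun i => if i < n then v (x i) else w + (i - n), ?_, ?_, ?_⟩
    · intro i j hij
      have h1 : v (x i) < v (x j) := hv (hx hij)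
      dsimp only
      split_ifs with hi hj hj
      · exact h1
      · have := hxw i hi
        omega
      · omega
      · omega
    · intro i hi
      dsimp only
      split_ifs with h
      · exact hPN (hvP _ (hxM i h))
      · have : i - n = 0 := by omega
        rw [this]
        exact hwN
    · intro j hj
      have hwin : ((Finset.range (m + 1)).image
          fun i => if j + i < n then v (x (j + i)) else w + (j + i - n)) =
          insert (if j + m < n then v (x (j + m)) else w + (j + m - n))
            (((Finset.range m).image fun i => x (j + i)).image v) := by
        rw [Finset.range_add_one, Finset.image_insert, Finset.image_image]
        congr 1
        apply Finset.image_congr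
        intro i hi
        have : j + i < n := by
          have := Finset.mem_range.1 (Finset.mem_coe.1 hi)
          omega
        simp [this]
      rw [hwin, hext]
      · exact hblue j (by omega)
      · intro y hy
        obtain ⟨i, hi, rfl⟩ := Finset.mem_image.1 hy
        have := Finset.mem_range.1 hi
        exact hxM _ (by omega)
      · rw [Finset.card_image_of_injective _ (fun a b h => by simpa using hx.injective h),
          Finset.card_range]
      · split_ifs with h
        · exact Finset.mem_insert_of_mem (hvP _ (hxM _ h))
        · have : j + m - n = 0 := by omega
          rw [this]
          exact Finset.mem_insert_self _ _
      · intro y hy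
        obtain ⟨i, hi, rfl⟩ := Finset.mem_image.1 hy
        have hi' := Finset.mem_range.1 hi
        split_ifs with h
        · exact hv (hx (by omega))
        · have := hxw (j + i) (by omega)
          omega

lemma Admissible.mono_t {k t t' n N : ℕ} (h : Admissible k t n N) (ht : t' ≤ t) :
    Admissible k t' n N := by
  intro χ
  rcases h χ with ⟨S, h1, h2, h3, h4⟩ | h
  · exact Or.inl ⟨S, h1, h2, h3, ht.trans h4⟩
  · exact Or.inr h

/-- The hypergraph Ramsey theorem for these configurations: `m` steps up from the `0`-uniform
problem, in which only the color of `∅` matters. -/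
lemma exists_admissible (m n : ℕ) : ∃ N, Admissible m (m + 1) (n + m) N := by
  induction m with
  | zero =>
    refine ⟨n + 1, fun χ => ?_⟩
    cases h : χ ∅
    · right
      refine ⟨fun i => i + 1, fun a b hab => Nat.succ_lt_succ hab, ?_, ?_⟩
      · intro i hi
        rw [Finset.mem_Icc]
        dsimp only
        omega
      · simpa using fun _ _ => h
    · left
      exact ⟨{1}, by simp, by simp, ⟨1, by simp, by simp, by simpa using h⟩,
        by simp [Finset.filter_singleton, h]⟩
  | succ m ih =>
    obtain ⟨N, hN⟩ := ih
    exact ⟨_, hN.step⟩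

/-- The all-red coloring has no blue path, and a red initial spread needs `k + 1` vertices. -/
lemma Admissible.lt {k t n N : ℕ} (h : Admissible k t n N) (hn : k + 1 ≤ n) : k + 1 ≤ N := by
  rcases h fun _ => true with ⟨S, hS, hc, -⟩ | ⟨x, -, -, hb⟩
  · have := Finset.card_le_card hS
    rw [Nat.card_Icc] at this
    omega
  · exact absurd (hb 0 (by omega)) (by simp)

lemma sum_bound {m M : ℕ} (hm : 2 ≤ m) (hM : m + 1 ≤ M) (hM4 : 4 ≤ M) :
    (∑ i ∈ Finset.range M, 2 ^ Nat.choose i m) + 1 < 2 ^ Nat.choose M m := by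
  obtain ⟨L, rfl⟩ : ∃ L, M = L + 1 := ⟨M - 1, by omega⟩
  obtain ⟨r, rfl⟩ : ∃ r, m = r + 1 := ⟨m - 1, by omega⟩
  have h1 : ∑ i ∈ Finset.range (L + 1), 2 ^ Nat.choose i (r + 1) ≤
      (L + 1) * 2 ^ Nat.choose L (r + 1) := by
    have := Finset.sum_le_card_nsmul (Finset.range (L + 1))
      (fun i => 2 ^ Nat.choose i (r + 1)) (2 ^ Nat.choose L (r + 1)) (fun i hi =>
        Nat.pow_le_pow_right (by norm_num)
          (Nat.choose_le_choose _ (by have := Finset.mem_range.1 hi; omega)))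
    simpa using this
  have h2 : L ≤ Nat.choose L r := by
    clear h1 hM4
    induction L, (show r + 1 ≤ L by omega) using Nat.le_induction with
    | base => simp
    | succ L hL ih =>
      obtain ⟨q, rfl⟩ : ∃ q, r = q + 1 := ⟨r - 1, by omega⟩
      have h3 := ih (by omega)
      have h4 : 0 < Nat.choose L q := Nat.choose_pos (by omega)
      rw [Nat.choose_succ_succ]
      simp only [Nat.succ_eq_add_one]
      omega
  have h3 : ∀ L : ℕ, 3 ≤ L → L + 2 < 2 ^ L := by
    intro L hL
    induction L, hL using Nat.le_induction with
    | base => norm_num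
    | succ L hL ih => rw [pow_succ]; omega
  have h4 : L + 2 < 2 ^ Nat.choose L r :=
    (h3 L (by omega)).trans_le (Nat.pow_le_pow_right (by norm_num) h2)
  have h5 : 1 ≤ 2 ^ Nat.choose L (r + 1) := Nat.one_le_two_pow
  rw [Nat.choose_succ_succ, pow_add]
  simp only [Nat.succ_eq_add_one]
  nlinarith

/-- For integers `k ≥ 4`, `4 ≤ t ≤ k+1`, and `n ≥ k+1`, the recurrence
`f_k(k+1, t; P_n) < 2^{C(M, k−1)}` holds, where `M = f_{k−1}(k, t−1; P_{n−1})`. -/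
theorem stmt_8 :
    ∀ k t n : ℕ, 4 ≤ k → 4 ≤ t → t ≤ k + 1 → k + 1 ≤ n →
      initialSpreadPathRamsey k t n <
        2 ^ Nat.choose (initialSpreadPathRamsey (k - 1) (t - 1) (n - 1)) (k - 1) := by
  intro k t n hk ht htk hkn
  obtain ⟨m, rfl⟩ : ∃ m, k = m + 1 := ⟨k - 1, by omega⟩
  obtain ⟨s, rfl⟩ : ∃ s, t = s + 1 := ⟨t - 1, by omega⟩
  obtain ⟨l, rfl⟩ : ∃ l, n = l + 1 := ⟨n - 1, by omega⟩
  simp only [Nat.add_sub_cancel]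
  have hne : {N | Admissible m s l N}.Nonempty := by
    obtain ⟨N, hN⟩ := exists_admissible m (l - m)
    rw [Nat.sub_add_cancel (by omega)] at hN
    exact ⟨N, hN.mono_t (by omega)⟩
  have hM : Admissible m s l (initialSpreadPathRamsey m s l) := Nat.sInf_mem hne
  have hlt := hM.lt (by omega)
  exact lt_of_le_of_lt (Nat.sInf_le hM.step) (sum_bound (by omega) hlt (by omega))
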